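/- Let (X, Y) be a complete hereditary cotorsion pair in an abelian category A such that Y is closed under kernels of epimorphisms. Then (G(X) ∩ Y, X ∩ Y) is a strong left Frobenius pair in A. -/

import Mathlib

/-!
Write `W = X ∩ Y`. Dimension shifting along the defining complex of `M ∈ G(X)` shows that all its
cycles `Z` satisfy `Extⁱ(Z, W) = 0` for `i ≥ 1`. Conversely, an object with this vanishing can be
resolved on the left by objects of `X` with no loss of the vanishing, because `(X, Y)` is complete.
Hence only the right half of the complex carries information, and `G(X)` is the largest class of
objects left orthogonal to `W` whose members embed in objects of `X` with cokernel again in the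
class (`GCo`; the equivalence is `GClass.gCo` and `GCo.gClass`). Closure properties of `G(X)` are
then proved by exhibiting a class of this kind.

* A pushout shows that an extension of an object of `X` by one of `G(X)` is in `G(X)`
  (`GCo.extension_mem`). Embedding the object `P ∈ X` of `0 → M → P → Z → 0` in an object of `Y`
  with cokernel in `X` therefore yields `0 → M → Q → L → 0` with `Q ∈ W` and `L ∈ G(X)`
  (`GCo.step_inter`).
* Since `Ext¹(G(X), W) = 0`, the horseshoe lemma applies to these embeddings, and `G(X)` is closed
  under extensions (`GCo.extClosed`). Closure under kernels of epimorphisms and under retracts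
  follows (`GCo.kerEpiClosed`, `GCo.retract`).

Now let `M ∈ G(X) ∩ Y`. In `0 → M → Q → L → 0` the cokernel `L` is in `Y` because the pair is
hereditary, so `W` is a cogenerator. In `0 → K → X₀ → M → 0` with `X₀ ∈ X` and `K ∈ Y`, the object
`X₀` is in `W` and `K` is in `G(X)`, so `W` is a generator.
-/

open CategoryTheory CategoryTheory.Limits CategoryTheory.Abelian ZeroObject

universe w v u

namespace FrobeniusPaper

variable {C : Type u} [Category.{v} C] [Abelian C]

/-- `f, g` form a short exact sequence `0 → A → B → D → 0` in the abelian category `C`. -/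
def IsSES {A B D : C} (f : A ⟶ B) (g : B ⟶ D) : Prop :=
  ∃ w : f ≫ g = 0, (ShortComplex.mk f g w).ShortExact

/-- A "subcategory" in the sense of the paper: a full additive subcategory, regarded as the
predicate of membership for its objects, closed under isomorphisms and direct summands. -/
structure IsSubcat (X : C → Prop) : Prop where
  zero : X 0
  iso_closed : ∀ {A B : C}, (A ≅ B) → X A → X B
  biprod_closed : ∀ {A B : C}, X A → X B → X (A ⊞ B)
  summand_closed : ∀ {A M : C} (i : A ⟶ M) (p : M ⟶ A), i ≫ p = 𝟙 A → X M → X A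

/-- `Hat X n M` means `M ∈ X̂ₙ`, i.e. there is an exact sequence
`0 → Xₙ → ⋯ → X₁ → X₀ → M → 0` with all `Xᵢ ∈ X`. -/
def Hat (X : C → Prop) : ℕ → C → Prop
  | 0, M => X M
  | (n + 1), M => ∃ (K E : C) (f : K ⟶ E) (g : E ⟶ M), IsSES f g ∧ X E ∧ Hat X n K

/-- `M ∈ X̂ = ⋃ₙ X̂ₙ`. -/
def HatAll (X : C → Prop) (M : C) : Prop := ∃ n, Hat X n M

/-- `W` is a cogenerator for `X`. -/
def IsCogenerator (W X : C → Prop) : Prop :=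
  (∀ M, W M → X M) ∧
    ∀ M, X M → ∃ (W₀ X' : C) (f : M ⟶ W₀) (g : W₀ ⟶ X'), IsSES f g ∧ W W₀ ∧ X X'

/-- `W` is a generator for `X`. -/
def IsGenerator (W X : C → Prop) : Prop :=
  (∀ M, W M → X M) ∧
    ∀ M, X M → ∃ (X' W₀ : C) (f : X' ⟶ W₀) (g : W₀ ⟶ M), IsSES f g ∧ W W₀ ∧ X X'

/-- `X` is closed under extensions. -/
def ExtClosed (X : C → Prop) : Prop :=
  ∀ ⦃A B D : C⦄ (f : A ⟶ B) (g : B ⟶ D), IsSES f g → X A → X D → X B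

/-- `X` is closed under kernels of epimorphisms. -/
def KerEpiClosed (X : C → Prop) : Prop :=
  ∀ ⦃A B D : C⦄ (f : A ⟶ B) (g : B ⟶ D), IsSES f g → X B → X D → X A

/-- A thick subcategory: closed under direct summands and two-out-of-three for
short exact sequences. -/
def IsThickSub (T : C → Prop) : Prop :=
  IsSubcat T ∧ ∀ ⦃A B D : C⦄ (f : A ⟶ B) (g : B ⟶ D), IsSES f g →
    (T A → T B → T D) ∧ (T A → T D → T B) ∧ (T B → T D → T A)

/-- Membership in `Thick(X)`, the smallest thick subcategory containing `X`. -/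
def thickClosure (X : C → Prop) (M : C) : Prop :=
  ∀ T : C → Prop, IsThickSub T → (∀ N, X N → T N) → T M

variable [HasExt.{w} C]

/-- `Y ∈ X^⊥`, i.e. `Extⁱ(M, Y) = 0` for all `i ≥ 1` and `M ∈ X`. -/
def rightPerp (X : C → Prop) (Y : C) : Prop :=
  ∀ M, X M → ∀ i : ℕ, 1 ≤ i → Subsingleton (Abelian.Ext M Y i)

/-- A left Frobenius pair `(X, W)`. -/
structure LeftFrobenius (X W : C → Prop) : Prop where
  subX : IsSubcat X
  subW : IsSubcat W
  extClosed : ExtClosed X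
  kerEpiClosed : KerEpiClosed X
  cogen : IsCogenerator W X
  perp : ∀ M, W M → rightPerp X M

/-- A strong left Frobenius pair `(X, W)`. -/
structure StrongLeftFrobenius (X W : C → Prop) extends LeftFrobenius X W : Prop where
  gen : IsGenerator W X
  proj : ∀ M N, W M → X N → ∀ i : ℕ, 1 ≤ i → Subsingleton (Abelian.Ext M N i)

/-- A cotorsion pair `(U, V)` on an extension-closed subcategory `B` of `C`. -/
structure CotorsionPairOn (B U V : C → Prop) : Prop where
  subU : ∀ M, U M → B M
  subV : ∀ M, V M → B M
  isoU : ∀ {A B' : C}, (A ≅ B') → U A → U B'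
  summandU : ∀ {A M : C} (i : A ⟶ M) (p : M ⟶ A), i ≫ p = 𝟙 A → U M → U A
  isoV : ∀ {A B' : C}, (A ≅ B') → V A → V B'
  summandV : ∀ {A M : C} (i : A ⟶ M) (p : M ⟶ A), i ≫ p = 𝟙 A → V M → V A
  ext1 : ∀ M N, U M → V N → Subsingleton (Abelian.Ext M N 1)
  res : ∀ M, B M → ∃ (V₀ U₀ : C) (f : V₀ ⟶ U₀) (g : U₀ ⟶ M), IsSES f g ∧ U U₀ ∧ V V₀
  cores : ∀ M, B M → ∃ (V₀ U₀ : C) (f : M ⟶ V₀) (g : V₀ ⟶ U₀), IsSES f g ∧ U U₀ ∧ V V₀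

/-- `GClass X W M`: there exists a doubly infinite exact sequence
`⋯ → P₋₁ → P₀ → P₁ → ⋯` with all terms in `X`, with `M ≅ Ker(P₀ → P₁)`, and such that the
complex `Hom(P, Q)` is exact for every `Q ∈ W`. -/
def GClass (X W : C → Prop) (M : C) : Prop :=
  ∃ (P : ℤ → C) (d : ∀ n : ℤ, P n ⟶ P (n + 1)) (hd : ∀ n, d n ≫ d (n + 1) = 0),
    (∀ n, X (P n)) ∧
    (∀ n, (ShortComplex.mk (d n) (d (n + 1)) (hd n)).Exact) ∧
    Nonempty (M ≅ kernel (d 0)) ∧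
    (∀ Q : C, W Q → ∀ (n : ℤ) (ψ : P (n + 1) ⟶ Q), d n ≫ ψ = 0 →
      ∃ φ : P (n + 1 + 1) ⟶ Q, d (n + 1) ≫ φ = ψ)

/-! ### Short exact sequences -/

section ShortExactSequences

variable {D : Type u} [Category.{v} D] [Abelian D]

lemma IsSES.zero {A B E : D} {f : A ⟶ B} {g : B ⟶ E} (h : IsSES f g) : f ≫ g = 0 := h.1

lemma IsSES.mono {A B E : D} {f : A ⟶ B} {g : B ⟶ E} (h : IsSES f g) : Mono f := h.2.mono_f

lemma IsSES.epi {A B E : D} {f : A ⟶ B} {g : B ⟶ E} (h : IsSES f g) : Epi g := h.2.epi_g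

lemma IsSES.lift {A B E : D} {f : A ⟶ B} {g : B ⟶ E} (h : IsSES f g) {T : D} (x : T ⟶ B)
    (hx : x ≫ g = 0) : ∃ y : T ⟶ A, y ≫ f = x := by
  have := h.2.mono_f
  exact h.2.exact.lift' x hx

lemma IsSES.desc {A B E : D} {f : A ⟶ B} {g : B ⟶ E} (h : IsSES f g) {T : D} (x : B ⟶ T)
    (hx : f ≫ x = 0) : ∃ y : E ⟶ T, g ≫ y = x := by
  have := h.2.epi_g
  exact h.2.exact.desc' x hx

/-- Short exactness checked on generalized elements, up to refinement in the middle. -/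
lemma IsSES.of_refinements {A B E : D} {f : A ⟶ B} {g : B ⟶ E} (w : f ≫ g = 0)
    (hf : ∀ (T : D) (x : T ⟶ A), x ≫ f = 0 → x = 0) (hg : Epi g)
    (h : ∀ (T : D) (x : T ⟶ B), x ≫ g = 0 →
      ∃ (T' : D) (π : T' ⟶ T) (_ : Epi π) (y : T' ⟶ A), π ≫ x = y ≫ f) : IsSES f g := by
  have : Mono f := Preadditive.mono_of_cancel_zero f (fun {T} x hx => hf T x hx)
  exact ⟨w, { exact := (ShortComplex.exact_iff_exact_up_to_refinements _).2 (fun T x hx => h T x hx)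
              mono_f := this
              epi_g := hg }⟩

lemma isSES_cokernel {A B : D} (f : A ⟶ B) [Mono f] : IsSES f (cokernel.π f) :=
  ⟨cokernel.condition f, { exact := ShortComplex.exact_cokernel f
                           mono_f := inferInstance
                           epi_g := inferInstance }⟩

lemma isSES_id_zero (A : D) : IsSES (𝟙 A) (0 : A ⟶ (0 : D)) :=
  IsSES.of_refinements (by simp) (fun T x hx => by simpa using hx)
    ⟨fun a b _ => (isZero_zero D).eq_of_src a b⟩ (fun T x _ => ⟨T, 𝟙 T, inferInstance, x, by simp⟩)

lemma isSES_biprod (A B : D) : IsSES (biprod.inl : A ⟶ A ⊞ B) (biprod.snd : A ⊞ B ⟶ B) :=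
  IsSES.of_refinements (by simp)
    (fun T x hx => by simpa using congrArg (fun z => z ≫ biprod.fst) hx) inferInstance
    (fun T x hx => ⟨T, 𝟙 T, inferInstance, x ≫ biprod.fst, by
      apply biprod.hom_ext <;> simp [hx]⟩)

/-- The cokernel `K` of a composite `A ↪ B ↪ M` is an extension of `M / B` by `B / A`. -/
lemma exists_ses_comp {A B E M F : D} {f : A ⟶ B} {p : B ⟶ E} {g : B ⟶ M} {q : M ⟶ F}
    (h₁ : IsSES f p) (h₂ : IsSES g q) :
    ∃ (K : D) (r : M ⟶ K) (s : E ⟶ K) (t : K ⟶ F), IsSES (f ≫ g) r ∧ IsSES s t := by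
  have := h₁.mono
  have := h₂.mono
  have := h₁.epi
  have := h₂.epi
  have hK := isSES_cokernel (f ≫ g)
  set r := cokernel.π (f ≫ g)
  obtain ⟨s, hs⟩ := h₁.desc (g ≫ r) (by simpa using hK.zero)
  obtain ⟨t, ht⟩ := hK.desc q (by simp [h₂.zero])
  refine ⟨_, r, s, t, hK, IsSES.of_refinements ?_ ?_ ?_ ?_⟩
  · rw [← cancel_epi p, reassoc_of% hs, ht, h₂.zero, comp_zero]
  · intro T x hx
    obtain ⟨T', π, _, y, hy⟩ := surjective_up_to_refinements_of_epi p x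
    obtain ⟨z, hz⟩ := hK.lift (y ≫ g) (by
      rw [Category.assoc, ← hs, ← reassoc_of% hy, hx, comp_zero])
    have hzy : z ≫ f = y := by rw [← cancel_mono g, Category.assoc, hz]
    rw [← cancel_epi π, hy, ← hzy, Category.assoc, h₁.zero, comp_zero, comp_zero]
  · exact epi_of_epi_fac ht
  · intro T x hx
    obtain ⟨T', π, hπ, y, hy⟩ := surjective_up_to_refinements_of_epi r x
    obtain ⟨z, hz⟩ := h₂.lift y (by rw [← ht, ← reassoc_of% hy, hx, comp_zero])
    exact ⟨T', π, hπ, z ≫ p, by rw [hy, ← hz, Category.assoc, Category.assoc, hs]⟩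

/-- Pushing out a short exact sequence along a morphism out of its left-hand term. -/
lemma exists_ses_of_isPushout {A B E A' P : D} {f : A ⟶ B} {g : B ⟶ E} {h : A ⟶ A'}
    {i : B ⟶ P} {j : A' ⟶ P} (hf : IsSES f g) (sq : IsPushout f h i j) :
    ∃ q : P ⟶ E, IsSES j q := by
  have := hf.mono
  have := hf.epi
  have hj : Mono j := (MorphismProperty.monomorphisms D).of_isPushout sq.flip ‹Mono f›
  let q : P ⟶ E := sq.desc g 0 (by simp [hf.zero])
  have hiq : i ≫ q = g := sq.inl_desc _ _ _
  have hjq : j ≫ q = 0 := sq.inr_desc _ _ _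
  have : Epi (biprod.desc i j) := ⟨fun a b hab => by
    apply sq.hom_ext
    · simpa using congrArg (fun z => biprod.inl ≫ z) hab
    · simpa using congrArg (fun z => biprod.inr ≫ z) hab⟩
  refine ⟨q, IsSES.of_refinements hjq ?_ (epi_of_epi_fac hiq) ?_⟩
  · intro T x hx
    rwa [← cancel_mono j, zero_comp]
  · intro T x hx
    obtain ⟨T', π, hπ, y, hy⟩ := surjective_up_to_refinements_of_epi (biprod.desc i j) x
    have hy' : y ≫ biprod.desc i j = y ≫ biprod.fst ≫ i + y ≫ biprod.snd ≫ j := by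
      rw [← Preadditive.comp_add]
      congr 1
      apply biprod.hom_ext' <;> simp
    obtain ⟨z, hz⟩ := hf.lift (y ≫ biprod.fst) (by
      have := congrArg (fun a => a ≫ q) (hy.trans hy')
      simpa [hx, hiq, hjq] using this.symm)
    refine ⟨T', π, hπ, z ≫ h + y ≫ biprod.snd, ?_⟩
    rw [hy, hy', ← Category.assoc y biprod.fst, ← hz, Category.assoc, sq.w]
    simp

/-- Horseshoe lemma: if the inclusion `i : A ↪ I` extends to `u : B ⟶ I`, then `B` embeds in
`I ⊞ J` with cokernel an extension of `J / E` by `I / A`. -/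
lemma exists_ses_horseshoe {A B E I J A' E' : D} {f : A ⟶ B} {g : B ⟶ E} {i : A ⟶ I} {p : I ⟶ A'}
    {j : E ⟶ J} {q : J ⟶ E'} (h : IsSES f g) (hI : IsSES i p) (hJ : IsSES j q) (u : B ⟶ I)
    (hu : f ≫ u = i) :
    ∃ (K : D) (φ : B ⟶ I ⊞ J) (r : I ⊞ J ⟶ K) (s : A' ⟶ K) (t : K ⟶ E'),
      IsSES φ r ∧ IsSES s t := by
  have := hI.mono
  have := hJ.mono
  have := hI.epi
  have := hJ.epi
  have := h.epi
  let φ : B ⟶ I ⊞ J := biprod.lift u (g ≫ j)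
  have hφ₁ : φ ≫ biprod.fst = u := biprod.lift_fst _ _
  have hφ₂ : φ ≫ biprod.snd = g ≫ j := biprod.lift_snd _ _
  have hg : ∀ (T : D) (b : T ⟶ B), (b ≫ φ) ≫ biprod.snd = 0 → ∃ a, a ≫ f = b := by
    intro T b hb
    apply h.lift
    rw [← cancel_mono j, zero_comp, Category.assoc, ← hφ₂, ← hb, Category.assoc]
  have hmono : Mono φ := Preadditive.mono_of_cancel_zero φ (fun {T} b hb => by
    obtain ⟨a, rfl⟩ := hg T b (by rw [hb, zero_comp])
    have : a ≫ i = 0 := by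
      rw [← hu, ← hφ₁, ← Category.assoc, ← Category.assoc, hb, zero_comp]
    rw [(cancel_mono i).1 (this.trans zero_comp.symm), zero_comp])
  have hK := isSES_cokernel φ
  set r := cokernel.π φ
  obtain ⟨s, hs⟩ := hI.desc (biprod.inl ≫ r) (by
    have : i ≫ (biprod.inl : I ⟶ I ⊞ J) = f ≫ φ := by
      apply biprod.hom_ext
      · simp [hφ₁, hu]
      · simp [hφ₂, reassoc_of% h.zero]
    rw [reassoc_of% this, hK.zero, comp_zero])
  obtain ⟨t, ht⟩ := hK.desc (biprod.snd ≫ q) (by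
    rw [reassoc_of% hφ₂, hJ.zero, comp_zero])
  refine ⟨_, φ, r, s, t, hK, IsSES.of_refinements ?_ ?_ ?_ ?_⟩
  · rw [← cancel_epi p, reassoc_of% hs, ht]
    simp
  · intro T x hx
    obtain ⟨T', π, _, y, hy⟩ := surjective_up_to_refinements_of_epi p x
    obtain ⟨b, hb⟩ := hK.lift (y ≫ biprod.inl) (by
      rw [Category.assoc, ← hs, ← reassoc_of% hy, hx, comp_zero])
    obtain ⟨a, rfl⟩ := hg _ b (by simp [hb])
    have hy' : y = a ≫ i := by
      have := congrArg (fun z => z ≫ biprod.fst) hb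
      simpa [hφ₁, hu] using this.symm
    rw [← cancel_epi π, hy, hy', Category.assoc, hI.zero, comp_zero, comp_zero]
  · have : Epi (biprod.snd ≫ q : I ⊞ J ⟶ E') := epi_comp _ _
    exact epi_of_epi_fac ht
  · intro T x hx
    obtain ⟨T', π, _, y, hy⟩ := surjective_up_to_refinements_of_epi r x
    obtain ⟨d, hd⟩ := hJ.lift (y ≫ biprod.snd) (by
      rw [Category.assoc, ← ht, ← reassoc_of% hy, hx, comp_zero])
    obtain ⟨T'', π', _, b, hb⟩ := surjective_up_to_refinements_of_epi g d
    refine ⟨T'', π' ≫ π, epi_comp _ _, (π' ≫ y ≫ biprod.fst - b ≫ u) ≫ p, ?_⟩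
    -- subtracting `b ≫ φ` kills the `J`-component of the lift `y` of `x`
    have key : π' ≫ y = (π' ≫ y ≫ biprod.fst - b ≫ u) ≫ biprod.inl + b ≫ φ := by
      apply biprod.hom_ext
      · simp [hφ₁]
      · simp [hφ₂, ← reassoc_of% hb, hd]
    rw [Category.assoc, hy, reassoc_of% key, Category.assoc, hs, Preadditive.add_comp,
      Category.assoc b, hK.zero, comp_zero, add_zero, Category.assoc]

/-- If `M` is a retract of `N` and `N ↪ I` has cokernel `L`, then `M ↪ I` has a cokernel `E` for
which `E ⊞ M` is an extension of `L` by `N`. -/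
lemma exists_ses_retract {M N I L : D} (i : M ⟶ N) (p : N ⟶ M) (hip : i ≫ p = 𝟙 M)
    {j : N ⟶ I} {c : I ⟶ L} (h : IsSES j c) :
    ∃ (E : D) (e : I ⟶ E) (s : N ⟶ E ⊞ M) (t : E ⊞ M ⟶ L), IsSES (i ≫ j) e ∧ IsSES s t := by
  have := h.mono
  have := h.epi
  have : IsSplitMono i := ⟨⟨p, hip⟩⟩
  have hE := isSES_cokernel (i ≫ j)
  set e := cokernel.π (i ≫ j)
  have hije : i ≫ j ≫ e = 0 := by simpa using hE.zero
  obtain ⟨t, ht⟩ := hE.desc c (by simp [h.zero])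
  refine ⟨_, e, biprod.lift (j ≫ e) p, biprod.desc t 0, hE, IsSES.of_refinements ?_ ?_ ?_ ?_⟩
  · simp [ht, h.zero]
  · intro T x hx
    have h₁ : x ≫ j ≫ e = 0 := by simpa using congrArg (fun z => z ≫ biprod.fst) hx
    have h₂ : x ≫ p = 0 := by simpa using congrArg (fun z => z ≫ biprod.snd) hx
    obtain ⟨z, hz⟩ := hE.lift (x ≫ j) (by simpa using h₁)
    have hzx : z ≫ i = x := by rw [← cancel_mono j, Category.assoc, hz]
    have : z = 0 := by rw [← Category.comp_id z, ← hip, ← Category.assoc, hzx, h₂]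
    rw [← hzx, this, zero_comp]
  · have ht' : Epi t := epi_of_epi_fac ht
    exact epi_of_epi_fac (biprod.inl_desc t 0)
  · intro T x hx
    have hE' := hE.epi
    obtain ⟨T', π, hπ, y, hy⟩ := surjective_up_to_refinements_of_epi e (x ≫ biprod.fst)
    have hxt : x ≫ biprod.fst ≫ t = 0 := by
      have : (biprod.desc t 0 : cokernel (i ≫ j) ⊞ M ⟶ L) = biprod.fst ≫ t := by
        apply biprod.hom_ext' <;> simp
      rw [← this, hx]
    obtain ⟨n, hn⟩ := h.lift y (by
      rw [← ht, ← reassoc_of% hy, hxt, comp_zero])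
    -- correct `n` by an element of `M` so that its image under `p` is the `M`-component of `x`
    refine ⟨T', π, hπ, n + (π ≫ x ≫ biprod.snd - n ≫ p) ≫ i, ?_⟩
    apply biprod.hom_ext
    · simp [hy, ← hn, hije]
    · simp [hip]

/-- An extension-closed class of objects that contains `0` and is closed under retracts is a
subcategory in the sense of `IsSubcat`. -/
lemma isSubcat_of_extClosed {X : D → Prop} (h0 : X 0) (hext : ExtClosed X)
    (hret : ∀ {A M : D} (i : A ⟶ M) (p : M ⟶ A), i ≫ p = 𝟙 A → X M → X A) : IsSubcat X where
  zero := h0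
  iso_closed e hA := hret e.inv e.hom e.inv_hom_id hA
  biprod_closed hA hB := hext _ _ (isSES_biprod _ _) hA hB
  summand_closed := hret

end ShortExactSequences

/-! ### Vanishing of Ext along short exact sequences and retracts -/

section Ext

variable {D : Type u} [Category.{v} D] [Abelian D] [HasExt.{w} D]

lemma ext_retract_left {M N Q : D} (i : M ⟶ N) (p : N ⟶ M) (hip : i ≫ p = 𝟙 M) {n : ℕ}
    (h : Subsingleton (Ext N Q n)) : Subsingleton (Ext M Q n) := by
  refine subsingleton_of_forall_eq 0 (fun x => ?_)
  have h0 : (Ext.mk₀ p).comp x (zero_add n) = 0 := Subsingleton.elim _ _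
  rw [← Ext.mk₀_id_comp x, ← hip, ← Ext.mk₀_comp_mk₀_assoc, h0, Ext.comp_zero]

lemma ext_retract_right {M N Q : D} (i : M ⟶ N) (p : N ⟶ M) (hip : i ≫ p = 𝟙 M) {n : ℕ}
    (h : Subsingleton (Ext Q N n)) : Subsingleton (Ext Q M n) := by
  refine subsingleton_of_forall_eq 0 (fun x => ?_)
  have h0 : x.comp (Ext.mk₀ i) (add_zero n) = 0 := Subsingleton.elim _ _
  rw [← Ext.comp_mk₀_id x, ← hip, ← Ext.mk₀_comp_mk₀, ← Ext.comp_assoc_of_second_deg_zero, h0,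
    Ext.zero_comp]

lemma ext_mid_left {A B E Q : D} {f : A ⟶ B} {g : B ⟶ E} (h : IsSES f g) {n : ℕ}
    (hA : Subsingleton (Ext A Q n)) (hE : Subsingleton (Ext E Q n)) :
    Subsingleton (Ext B Q n) := by
  refine subsingleton_of_forall_eq 0 (fun x => ?_)
  obtain ⟨y, rfl⟩ := Ext.contravariant_sequence_exact₂ h.2 Q x (Subsingleton.elim _ _)
  have : y = 0 := Subsingleton.elim _ _
  rw [this, Ext.comp_zero]

lemma ext_mid_right {A B E Q : D} {f : A ⟶ B} {g : B ⟶ E} (h : IsSES f g) {n : ℕ}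
    (hA : Subsingleton (Ext Q A n)) (hE : Subsingleton (Ext Q E n)) :
    Subsingleton (Ext Q B n) := by
  refine subsingleton_of_forall_eq 0 (fun x => ?_)
  obtain ⟨y, rfl⟩ := Ext.covariant_sequence_exact₂ Q h.2 x (Subsingleton.elim _ _)
  have : y = 0 := Subsingleton.elim _ _
  rw [this, Ext.zero_comp]

lemma ext_sub_left {A B E Q : D} {f : A ⟶ B} {g : B ⟶ E} (h : IsSES f g) {n : ℕ}
    (hB : Subsingleton (Ext B Q n)) (hE : Subsingleton (Ext E Q (n + 1))) :
    Subsingleton (Ext A Q n) := by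
  refine subsingleton_of_forall_eq 0 (fun x => ?_)
  obtain ⟨y, rfl⟩ := Ext.contravariant_sequence_exact₁ h.2 Q x (add_comm 1 n) (Subsingleton.elim _ _)
  have : y = 0 := Subsingleton.elim _ _
  rw [this, Ext.comp_zero]

lemma ext_quot_left {A B E Q : D} {f : A ⟶ B} {g : B ⟶ E} (h : IsSES f g) {n : ℕ}
    (hA : Subsingleton (Ext A Q n)) (hB : Subsingleton (Ext B Q (n + 1))) :
    Subsingleton (Ext E Q (n + 1)) := by
  refine subsingleton_of_forall_eq 0 (fun x => ?_)
  obtain ⟨y, rfl⟩ := Ext.contravariant_sequence_exact₃ h.2 Q x (Subsingleton.elim _ _) (add_comm 1 n)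
  have : y = 0 := Subsingleton.elim _ _
  rw [this, Ext.comp_zero]

lemma ext_quot_right {A B E Q : D} {f : A ⟶ B} {g : B ⟶ E} (h : IsSES f g) {n : ℕ}
    (hB : Subsingleton (Ext Q B n)) (hA : Subsingleton (Ext Q A (n + 1))) :
    Subsingleton (Ext Q E n) := by
  refine subsingleton_of_forall_eq 0 (fun x => ?_)
  obtain ⟨y, rfl⟩ := Ext.covariant_sequence_exact₃ Q h.2 x rfl (Subsingleton.elim _ _)
  have : y = 0 := Subsingleton.elim _ _
  rw [this, Ext.zero_comp]

lemma exists_extension_of_ext_one {A B E Q : D} {f : A ⟶ B} {g : B ⟶ E} (h : IsSES f g)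
    (hE : Subsingleton (Ext E Q 1)) (x : A ⟶ Q) : ∃ y : B ⟶ Q, f ≫ y = x := by
  obtain ⟨y, hy⟩ := Ext.contravariant_sequence_exact₁ h.2 Q (Ext.mk₀ x) (add_zero 1)
    (Subsingleton.elim _ _)
  obtain ⟨y, rfl⟩ := (Ext.mk₀_bijective _ _).2 y
  refine ⟨y, (Ext.mk₀_bijective _ _).1 ?_⟩
  rw [← hy, Ext.mk₀_comp_mk₀]

lemma ext_one_of_exists_extension {A B E Q : D} {f : A ⟶ B} {g : B ⟶ E} (h : IsSES f g)
    (hB : Subsingleton (Ext B Q 1)) (hx : ∀ x : A ⟶ Q, ∃ y : B ⟶ Q, f ≫ y = x) :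
    Subsingleton (Ext E Q 1) := by
  refine subsingleton_of_forall_eq 0 (fun x => ?_)
  obtain ⟨z, rfl⟩ := Ext.contravariant_sequence_exact₃ h.2 Q x (Subsingleton.elim _ _) (add_zero 1)
  obtain ⟨z, rfl⟩ := (Ext.mk₀_bijective _ _).2 z
  obtain ⟨y, rfl⟩ := hx z
  rw [← Ext.mk₀_comp_mk₀]
  exact h.2.extClass_comp_assoc _

end Ext

/-! ### A coinductive description of `G(X)` -/

section Gorenstein

variable {D : Type u} [Category.{v} D] [Abelian D] [HasExt.{w} D]

/-- `M` lies in the left orthogonal of `W`: `Extⁱ(M, Q) = 0` for all `i ≥ 1` and `Q ∈ W`. -/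
def LeftPerp (W : D → Prop) (M : D) : Prop :=
  ∀ Q, W Q → ∀ i : ℕ, 1 ≤ i → Subsingleton (Ext M Q i)

/-- `N` embeds in an object of `X` with cokernel `N'`. -/
def XStep (X : D → Prop) (N N' : D) : Prop :=
  ∃ (E : D) (f : N ⟶ E) (g : E ⟶ N'), IsSES f g ∧ X E

/-- Coinductive form of `G(X)`: `GCo X W` is the largest class of objects in the left orthogonal of
`W` such that each member embeds in an object of `X` with cokernel again in the class. The class is
encoded as the union of all classes `S` with this property. -/
def GCo (X W : D → Prop) (M : D) : Prop :=
  ∃ S : D → Prop, S M ∧ ∀ N, S N → LeftPerp W N ∧ ∃ N', XStep X N N' ∧ S N'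

lemma GCo.leftPerp {X W : D → Prop} {M : D} (h : GCo X W M) : LeftPerp W M := by
  obtain ⟨S, hM, hS⟩ := h
  exact (hS M hM).1

lemma GCo.step {X W : D → Prop} {M : D} (h : GCo X W M) : ∃ N, XStep X M N ∧ GCo X W N := by
  obtain ⟨S, hM, hS⟩ := h
  obtain ⟨N, h₁, h₂⟩ := (hS M hM).2
  exact ⟨N, h₁, S, h₂, hS⟩

lemma GCo.intro {X W : D → Prop} {M N : D} (hM : LeftPerp W M) (h : XStep X M N)
    (hN : GCo X W N) : GCo X W M := by
  refine ⟨fun K => GCo X W K ∨ K = M, Or.inr rfl, ?_⟩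
  rintro K (hK | rfl)
  · obtain ⟨K', h₁, h₂⟩ := hK.step
    exact ⟨hK.leftPerp, K', h₁, Or.inl h₂⟩
  · exact ⟨hM, N, h, Or.inl hN⟩

/-- A relation that can be continued in both directions inside a class `G` admits a bi-infinite
chain through every member of `G`. -/
lemma exists_int_chain {α : Type*} (R : α → α → Prop) (G : α → Prop)
    (hr : ∀ a, G a → ∃ b, R a b ∧ G b) (hl : ∀ a, G a → ∃ b, R b a ∧ G b) (a : α) (ha : G a) :
    ∃ Z : ℤ → α, Z 0 = a ∧ (∀ n, G (Z n)) ∧ ∀ n, R (Z n) (Z (n + 1)) := by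
  choose! r hr₁ hr₂ using hr
  choose! l hl₁ hl₂ using hl
  have hrG : ∀ n : ℕ, G (r^[n] a) := fun n => by
    induction n with
    | zero => exact ha
    | succ n ih => rw [Function.iterate_succ_apply']; exact hr₂ _ ih
  have hlG : ∀ n : ℕ, G (l^[n] a) := fun n => by
    induction n with
    | zero => exact ha
    | succ n ih => rw [Function.iterate_succ_apply']; exact hl₂ _ ih
  let Z : ℤ → α := fun n => match n with
    | Int.ofNat n => r^[n] a
    | Int.negSucc n => l^[n + 1] a
  refine ⟨Z, rfl, ?_, ?_⟩
  · rintro (n | n)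
    · exact hrG n
    · exact hlG (n + 1)
  · rintro (n | n)
    · change R (r^[n] a) (r^[n + 1] a)
      rw [Function.iterate_succ_apply']
      exact hr₁ _ (hrG n)
    · cases n with
      | zero => exact hl₁ a ha
      | succ n =>
        change R (l^[n + 1 + 1] a) (l^[n + 1] a)
        rw [Function.iterate_succ_apply' l (n + 1)]
        exact hl₁ _ (hlG (n + 1))

/-- Splicing: a bi-infinite chain of short exact sequences with middle terms in `X`, all of whose
outer terms are left orthogonal to `W`, yields the complex required by `GClass`. -/
lemma gClass_of_chain {X W : D → Prop} (Z : ℤ → D) (hZ : ∀ n, LeftPerp W (Z n))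
    (hR : ∀ n, XStep X (Z n) (Z (n + 1))) : GClass X W (Z 0) := by
  choose P f g hfg hP using hR
  have := fun n => (hfg n).mono
  have := fun n => (hfg n).epi
  have hd : ∀ n, (g n ≫ f (n + 1)) ≫ g (n + 1) ≫ f (n + 1 + 1) = 0 := fun n => by
    rw [Category.assoc, reassoc_of% (hfg (n + 1)).zero, zero_comp, comp_zero]
  refine ⟨P, fun n => g n ≫ f (n + 1), hd, hP, ?_, ?_, ?_⟩
  · intro n
    rw [ShortComplex.exact_iff_exact_up_to_refinements]
    intro T x hx
    obtain ⟨y, rfl⟩ := (hfg (n + 1)).lift x (by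
      rw [← cancel_mono (f (n + 1 + 1)), zero_comp, Category.assoc]
      exact hx)
    obtain ⟨T', π, hπ, z, hz⟩ := surjective_up_to_refinements_of_epi (g n) y
    exact ⟨T', π, hπ, z, by simp [reassoc_of% hz]⟩
  · exact ⟨IsLimit.conePointUniqueUpToIso (hfg 0).2.fIsKernel (kernelIsKernel (g 0)) ≪≫
      (kernelCompMono (g 0) (f (0 + 1))).symm⟩
  · intro Q hQ n ψ hψ
    have h0 : f (n + 1) ≫ ψ = 0 := by
      rw [← cancel_epi (g n), comp_zero, ← Category.assoc]
      exact hψ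
    obtain ⟨χ, rfl⟩ := (hfg (n + 1)).desc ψ h0
    obtain ⟨φ, rfl⟩ := exists_extension_of_ext_one (hfg (n + 1 + 1)) (hZ _ Q hQ 1 le_rfl) χ
    exact ⟨φ, by simp⟩

/-- The complex attached to `M ∈ G(X)` has all its cycles left orthogonal to `W`, so these cycles
form a class as in the definition of `GCo`. -/
lemma GClass.gCo {X W : D → Prop} (hXW : ∀ M, X M → LeftPerp W M) {M : D}
    (h : GClass X W M) : GCo X W M := by
  obtain ⟨P, d, hd, hP, hex, ⟨e⟩, hW⟩ := h
  let g : ∀ n, P n ⟶ kernel (d (n + 1)) := fun n => kernel.lift (d (n + 1)) (d n) (hd n)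
  have hg : ∀ n, g n ≫ kernel.ι (d (n + 1)) = d n := fun n => kernel.lift_ι _ _ _
  have hge : ∀ n, Epi (g n) := fun n => (ShortComplex.exact_iff_epi_kernel_lift _).1 (hex n)
  have hses : ∀ n, IsSES (kernel.ι (d n)) (g n) := fun n => by
    refine IsSES.of_refinements ?_ ?_ (hge n) ?_
    · rw [← cancel_mono (kernel.ι (d (n + 1))), Category.assoc, hg, kernel.condition, zero_comp]
    · intro T x hx
      rwa [← cancel_mono (kernel.ι (d n)), zero_comp]
    · intro T x hx
      have hx' : x ≫ d n = 0 := by rw [← hg, reassoc_of% hx, zero_comp]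
      exact ⟨T, 𝟙 T, inferInstance, kernel.lift (d n) x hx', by simp⟩
  have hext : ∀ Q, W Q → ∀ (i : ℕ) (n : ℤ), Subsingleton (Ext (kernel (d n)) Q (i + 1)) := by
    intro Q hQ i
    induction i with
    | zero =>
      intro n
      obtain ⟨m, rfl⟩ : ∃ m : ℤ, n = m + 1 + 1 + 1 := ⟨n - 3, by ring⟩
      refine ext_one_of_exists_extension (hses _) (hXW _ (hP _) Q hQ 1 le_rfl) (fun x => ?_)
      obtain ⟨φ, hφ⟩ := hW Q hQ m (g (m + 1) ≫ x) (by
        rw [← hg, Category.assoc, reassoc_of% (hses (m + 1)).zero, zero_comp, comp_zero])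
      refine ⟨φ, ?_⟩
      have := hge (m + 1)
      rw [← cancel_epi (g (m + 1)), ← hφ, reassoc_of% hg (m + 1)]
    | succ i ih =>
      intro n
      obtain ⟨m, rfl⟩ : ∃ m : ℤ, n = m + 1 := ⟨n - 1, by ring⟩
      exact ext_quot_left (hses m) (ih m) (hXW _ (hP _) Q hQ _ (by lia))
  have hperp : ∀ n, LeftPerp W (kernel (d n)) := by
    intro n Q hQ i hi
    obtain ⟨j, rfl⟩ : ∃ j, i = j + 1 := ⟨i - 1, by lia⟩
    exact hext Q hQ j n
  have hker : GCo X W (kernel (d 0)) := by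
    refine ⟨fun N => ∃ n : ℤ, N = kernel (d n), ⟨0, rfl⟩, ?_⟩
    rintro _ ⟨n, rfl⟩
    exact ⟨hperp n, _, ⟨_, _, _, hses n, hP n⟩, n + 1, rfl⟩
  obtain ⟨N, ⟨E, f, g', hfg, hE⟩, hN⟩ := hker.step
  refine GCo.intro (fun Q hQ i hi => ext_retract_left e.hom e.inv e.hom_inv_id
    (hker.leftPerp Q hQ i hi)) ⟨E, e.hom ≫ f, g', ?_, hE⟩ hN
  have := hfg.mono
  refine IsSES.of_refinements (by simp [hfg.zero]) ?_ hfg.epi ?_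
  · intro T x hx
    rwa [← cancel_mono (e.hom ≫ f), zero_comp]
  · intro T x hx
    obtain ⟨y, rfl⟩ := hfg.lift x hx
    exact ⟨T, 𝟙 T, inferInstance, y ≫ e.inv, by simp⟩

/-- For the converse it suffices that every object is a quotient of an object of `X`: the kernels
of such presentations stay left orthogonal to `W` by dimension shifting. -/
lemma GCo.gClass {X W : D → Prop} (hXW : ∀ M, X M → LeftPerp W M)
    (hres : ∀ M : D, ∃ (K E : D) (f : K ⟶ E) (g : E ⟶ M), IsSES f g ∧ X E) {M : D}
    (h : GCo X W M) : GClass X W M := by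
  obtain ⟨Z, rfl, hZ, hR⟩ := exists_int_chain (XStep X) (GCo X W) (fun a ha => ha.step)
    (fun a ha => by
      obtain ⟨K, E, f, g, hfg, hE⟩ := hres a
      have hs : XStep X K a := ⟨E, f, g, hfg, hE⟩
      exact ⟨K, hs, GCo.intro (fun Q hQ i hi => ext_sub_left hfg (hXW E hE Q hQ i hi)
        (ha.leftPerp Q hQ _ (by lia))) hs ha⟩) M h
  exact gClass_of_chain Z (fun n => (hZ n).leftPerp) hR

end Gorenstein

/-! ### Closure properties of `G(X)` -/

section CotorsionPair

variable {D : Type u} [Category.{v} D] [Abelian D] [HasExt.{w} D]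

lemma LeftPerp.mid {W : D → Prop} {A B E : D} {f : A ⟶ B} {g : B ⟶ E} (h : IsSES f g)
    (hA : LeftPerp W A) (hE : LeftPerp W E) : LeftPerp W B :=
  fun Q hQ i hi => ext_mid_left h (hA Q hQ i hi) (hE Q hQ i hi)

lemma GCo.of_mem {X W : D → Prop} (hXW : ∀ M, X M → LeftPerp W M) (hX0 : X (0 : D))
    {M : D} (hM : X M) : GCo X W M :=
  ⟨X, hM, fun N hN => ⟨hXW N hN, 0, ⟨N, 𝟙 N, 0, isSES_id_zero N, hN⟩, hX0⟩⟩

/-- An extension of an object of `X` by an object of `G(X)` lies in `G(X)`. -/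
lemma GCo.extension_mem {X W : D → Prop} (hXW : ∀ M, X M → LeftPerp W M) (hXext : ExtClosed X)
    {Z L X₀ : D} {f : Z ⟶ L} {g : L ⟶ X₀} (h : IsSES f g) (hZ : GCo X W Z) (hX₀ : X X₀) :
    GCo X W L := by
  obtain ⟨Z', ⟨P, i, p, hip, hP⟩, hZ'⟩ := hZ.step
  obtain ⟨q, hq⟩ := exists_ses_of_isPushout h (IsPushout.of_hasPushout f i)
  obtain ⟨r, hr⟩ := exists_ses_of_isPushout hip (IsPushout.of_hasPushout f i).flip
  exact GCo.intro (hZ.leftPerp.mid h (hXW _ hX₀)) ⟨_, _, r, hr, hXext _ _ hq hP hX₀⟩ hZ'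

/-- Every object of `G(X)` embeds in an object of `X ∩ Y` with cokernel in `G(X)`. -/
lemma GCo.step_inter {X Y W : D → Prop} (hXW : ∀ M, X M → LeftPerp W M) (hXext : ExtClosed X)
    (hcores : ∀ M : D, ∃ (Y₀ X₀ : D) (f : M ⟶ Y₀) (g : Y₀ ⟶ X₀), IsSES f g ∧ X X₀ ∧ Y Y₀)
    {M : D} (h : GCo X W M) : ∃ L, XStep (fun Q => X Q ∧ Y Q) M L ∧ GCo X W L := by
  obtain ⟨Z, ⟨P, i, p, hip, hP⟩, hZ⟩ := h.step
  obtain ⟨Y₀, X₀, f, g, hfg, hX₀, hY₀⟩ := hcores P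
  obtain ⟨L, r, s, t, h₁, h₂⟩ := exists_ses_comp hip hfg
  exact ⟨L, ⟨Y₀, _, r, h₁, hXext _ _ hfg hP hX₀, hY₀⟩, hZ.extension_mem hXW hXext h₂ hX₀⟩

/-- If members of `G(X)` embed in objects of `W` with cokernels in `G(X)`, the horseshoe lemma
makes `G(X)` closed under extensions. -/
lemma GCo.extClosed {X W : D → Prop} (hWX : ∀ M, W M → X M) (hXext : ExtClosed X)
    (hstep : ∀ M, GCo X W M → ∃ L, XStep W M L ∧ GCo X W L) : ExtClosed (GCo X W) := by
  intro A B E f g h hA hE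
  refine ⟨fun B => ∃ (A E : D) (f : A ⟶ B) (g : B ⟶ E), IsSES f g ∧ GCo X W A ∧ GCo X W E,
    ⟨A, E, f, g, h, hA, hE⟩, ?_⟩
  rintro B ⟨A, E, f, g, h, hA, hE⟩
  obtain ⟨A', ⟨I, i, p, hI, hWI⟩, hA'⟩ := hstep A hA
  obtain ⟨E', ⟨J, j, q, hJ, hWJ⟩, hE'⟩ := hstep E hE
  obtain ⟨u, hu⟩ := exists_extension_of_ext_one h (hE.leftPerp I hWI 1 le_rfl) i
  obtain ⟨K, φ, r, s, t, h₁, h₂⟩ := exists_ses_horseshoe h hI hJ u hu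
  exact ⟨hA.leftPerp.mid h hE.leftPerp, K,
    ⟨_, φ, r, h₁, hXext _ _ (isSES_biprod I J) (hWX _ hWI) (hWX _ hWJ)⟩,
    A', E', s, t, h₂, hA', hE'⟩

lemma GCo.kerEpiClosed {X W : D → Prop} (hext : ExtClosed (GCo X W)) :
    KerEpiClosed (GCo X W) := by
  intro A B E f g h hB hE
  obtain ⟨B', ⟨I, i, p, hI, hXI⟩, hB'⟩ := hB.step
  obtain ⟨K, r, s, t, h₁, h₂⟩ := exists_ses_comp h hI
  exact GCo.intro (fun Q hQ n hn => ext_sub_left h (hB.leftPerp Q hQ n hn)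
    (hE.leftPerp Q hQ _ (by lia))) ⟨I, _, r, h₁, hXI⟩ (hext _ _ h₂ hE hB')

/-- Closure under retracts: retracts of objects of `G(X)` form a class as in the definition of
`GCo`, by `exists_ses_retract`. -/
lemma GCo.retract {X W : D → Prop} (hext : ExtClosed (GCo X W)) {M N : D} (i : M ⟶ N)
    (p : N ⟶ M) (hip : i ≫ p = 𝟙 M) (hN : GCo X W N) : GCo X W M := by
  refine ⟨fun M => ∃ (N : D) (i : M ⟶ N) (p : N ⟶ M), i ≫ p = 𝟙 M ∧ GCo X W N,
    ⟨N, i, p, hip, hN⟩, ?_⟩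
  rintro M ⟨N, i, p, hip, hN⟩
  obtain ⟨L, ⟨I, j, c, hI, hXI⟩, hL⟩ := hN.step
  obtain ⟨E, e, s, t, h₁, h₂⟩ := exists_ses_retract i p hip hI
  exact ⟨fun Q hQ n hn => ext_retract_left i p hip (hN.leftPerp Q hQ n hn), E,
    ⟨I, _, e, h₁, hXI⟩, E ⊞ M, biprod.inl, biprod.fst, biprod.inl_fst, hext _ _ h₂ hN hL⟩

end CotorsionPair

/-- If `(X, Y)` is a complete hereditary cotorsion pair in an abelian
category with `Y` closed under kernels of epimorphisms, then `(G(X) ∩ Y, X ∩ Y)` is a strong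
left Frobenius pair. -/
theorem statement11 {C : Type u} [Category.{v} C] [Abelian C]
    [EnoughProjectives C] [EnoughInjectives C] [HasExt.{w} C]
    (X Y : C → Prop)
    (hX : ∀ M, X M ↔ ∀ N, Y N → Subsingleton (Abelian.Ext M N 1))
    (hY : ∀ N, Y N ↔ ∀ M, X M → Subsingleton (Abelian.Ext M N 1))
    (hres : ∀ M : C, ∃ (Y₀ X₀ : C) (f : Y₀ ⟶ X₀) (g : X₀ ⟶ M), IsSES f g ∧ X X₀ ∧ Y Y₀)
    (hcores : ∀ M : C, ∃ (Y₀ X₀ : C) (f : M ⟶ Y₀) (g : Y₀ ⟶ X₀), IsSES f g ∧ X X₀ ∧ Y Y₀)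
    (hhered : ∀ M N, X M → Y N → ∀ i : ℕ, 1 ≤ i → Subsingleton (Abelian.Ext M N i))
    (hYker : KerEpiClosed Y) :
    StrongLeftFrobenius
      (fun M => GClass X (fun Q => X Q ∧ Y Q) M ∧ Y M)
      (fun M => X M ∧ Y M) := by
  have hXext : ExtClosed X := fun A B E f g h hA hE =>
    (hX B).2 fun N hN => ext_mid_left h ((hX A).1 hA N hN) ((hX E).1 hE N hN)
  have hYext : ExtClosed Y := fun A B E f g h hA hE =>
    (hY B).2 fun N hN => ext_mid_right h ((hY A).1 hA N hN) ((hY E).1 hE N hN)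
  have hYcok : ∀ {A B E : C} (f : A ⟶ B) (g : B ⟶ E), IsSES f g → Y A → Y B → Y E :=
    fun f g h hA hB => (hY _).2 fun N hN => ext_quot_right h ((hY _).1 hB N hN)
      (hhered N _ hN hA 2 (by lia))
  have hXret : ∀ {A M : C} (i : A ⟶ M) (p : M ⟶ A), i ≫ p = 𝟙 A → X M → X A :=
    fun i p hip hM => (hX _).2 fun N hN => ext_retract_left i p hip ((hX _).1 hM N hN)
  have hYret : ∀ {A M : C} (i : A ⟶ M) (p : M ⟶ A), i ≫ p = 𝟙 A → Y M → Y A :=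
    fun i p hip hM => (hY _).2 fun N hN => ext_retract_right i p hip ((hY _).1 hM N hN)
  -- `0` is a retract of any object, and completeness supplies objects of `X` and of `Y`
  obtain ⟨Y₁, X₁, _, _, _, hX₁, hY₁⟩ := hres (0 : C)
  have hX0 : X (0 : C) := hXret (0 : (0 : C) ⟶ X₁) 0 ((isZero_zero C).eq_of_src _ _) hX₁
  have hY0 : Y (0 : C) := hYret (0 : (0 : C) ⟶ Y₁) 0 ((isZero_zero C).eq_of_src _ _) hY₁
  have hXW : ∀ M, X M → LeftPerp (fun Q => X Q ∧ Y Q) M :=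
    fun M hM Q hQ i hi => hhered M Q hM hQ.2 i hi
  have hG : ∀ M, GClass X (fun Q => X Q ∧ Y Q) M ↔ GCo X (fun Q => X Q ∧ Y Q) M := fun M =>
    ⟨GClass.gCo hXW, GCo.gClass hXW fun M => by
      obtain ⟨K, E, f, g, hfg, hE, -⟩ := hres M
      exact ⟨K, E, f, g, hfg, hE⟩⟩
  have hstep : ∀ M, GCo X (fun Q => X Q ∧ Y Q) M → ∃ L, XStep (fun Q => X Q ∧ Y Q) M L ∧
      GCo X (fun Q => X Q ∧ Y Q) L := fun M hM => hM.step_inter hXW hXext hcores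
  have hGext : ExtClosed (GCo X (fun Q => X Q ∧ Y Q)) :=
    GCo.extClosed (fun M hM => hM.1) hXext hstep
  have hGker := GCo.kerEpiClosed hGext
  have hWG : ∀ M, X M ∧ Y M → GCo X (fun Q => X Q ∧ Y Q) M ∧ Y M :=
    fun M hM => ⟨GCo.of_mem hXW hX0 hM.1, hM.2⟩
  have hext : ExtClosed (fun M => GCo X (fun Q => X Q ∧ Y Q) M ∧ Y M) :=
    fun A B E f g h hA hE => ⟨hGext f g h hA.1 hE.1, hYext f g h hA.2 hE.2⟩
  simp only [hG]
  exact
    { subX := isSubcat_of_extClosed (hWG 0 ⟨hX0, hY0⟩) hext fun i p hip hM =>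
        ⟨hM.1.retract hGext i p hip, hYret i p hip hM.2⟩
      subW := isSubcat_of_extClosed ⟨hX0, hY0⟩
        (fun A B E f g h hA hE => ⟨hXext f g h hA.1 hE.1, hYext f g h hA.2 hE.2⟩)
        fun i p hip hM => ⟨hXret i p hip hM.1, hYret i p hip hM.2⟩
      extClosed := hext
      kerEpiClosed := fun A B E f g h hB hE =>
        ⟨hGker f g h hB.1 hE.1, hYker f g h hB.2 hE.2⟩
      cogen := ⟨hWG, fun M hM => by
        obtain ⟨L, ⟨Q, f, g, hfg, hQ⟩, hL⟩ := hstep M hM.1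
        exact ⟨Q, L, f, g, hfg, hQ, hL, hYcok f g hfg hM.2 hQ.2⟩⟩
      perp := fun Q hQ M hM i hi => hM.1.leftPerp Q hQ i hi
      gen := ⟨hWG, fun M hM => by
        obtain ⟨K, E, f, g, hfg, hE, hK⟩ := hres M
        exact ⟨K, E, f, g, hfg, ⟨hE, hYext f g hfg hK hM.2⟩,
          hGker f g hfg (GCo.of_mem hXW hX0 hE) hM.1, hK⟩⟩
      proj := fun Q M hQ hM i hi => hhered Q M hQ.1 hM.2 i hi }

end FrobeniusPaper
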